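/- Let ξ be a centered Gaussian random vector in ℝ^d with covariance matrix C, let A be a symmetric real d×d matrix, and set R_j = Tr((AC)^j). Then for every n ≥ 1, E⟨ξ, Aξ⟩^n = Σ_{m=1}^{n} Σ_{k ∈ J(m,n)} 2^{n−m} ( Π_{j=1}^{m} R_{k_j} ) · Π_{j=1}^{m} (n − s_{j−1}(k) − 1)^{\underline{k_j − 1}}, where J(m,n) is the set of m-tuples k = (k_1,…,k_m) of positive integers with k_1 + ⋯ + k_m = n, s_j(k) = k_1 + ⋯ + k_j (s_0(k) = 0), and a^{\underline{b}} = a(a−1)⋯(a−b+1) is the falling factorial. -/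

import Mathlib

open MeasureTheory ProbabilityTheory Filter Matrix

noncomputable section

/-- `ξ` is a centered Gaussian random vector with covariance matrix `C`. -/
def IsCenteredGaussian {Ω : Type*} [MeasurableSpace Ω] (P : Measure Ω) {n : ℕ}
    (ξ : Ω → Fin n → ℝ) (C : Matrix (Fin n) (Fin n) ℝ) : Prop :=
  Measurable ξ ∧
    ∀ v : Fin n → ℝ,
      P.map (fun ω => v ⬝ᵥ ξ ω) = gaussianReal 0 (Real.toNNReal (v ⬝ᵥ C.mulVec v))

/-- Partial sum `s_j(k) = k_1 + ⋯ + k_j` (1-based; sums the first `j` entries). -/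
def psum {m : ℕ} (k : Fin m → ℕ) (j : ℕ) : ℕ :=
  ∑ i ∈ Finset.univ.filter (fun i : Fin m => (i : ℕ) < j), k i

/-- `J(m,n)`: `m`-tuples of positive integers summing to `n`. -/
def Jset (m n : ℕ) : Finset (Fin m → ℕ) :=
  (Finset.Nat.antidiagonalTuple m n).filter fun k => ∀ j, 1 ≤ k j

/-!
Write `q x = x ⬝ᵥ A *ᵥ x`. Gaussian integration by parts, `E (ξ i * p ξ) = ∑ j, C i j * E (∂ⱼp ξ)`,
applied to one factor `q` of `q ^ (n + 1)` either closes up to the trace of `A * C` or hits another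
factor, chaining the two matrices to `A * C * A`. Iterating over the length of the chain gives,
for the moments `M n = E (q ξ ^ n)`,
`M (n + 1) = ∑ a ≤ n, 2 ^ a * n.descFactorial a * tr ((A * C) ^ (a + 1)) * M (n - a)`,
and unrolling this recurrence is summing over compositions of the exponent, the parts being the
lengths of the successive chains. Integration by parts itself is checked on monomials for
independent standard Gaussians and carried over to `ξ` through a factorization `C = S * Sᵀ`, using
that the one-dimensional projections determine the law of `ξ`.
-/

section SteinFunctional

open MvPolynomial

variable {σ τ R : Type*} [CommSemiring R]

theorem linearMap_C_mul (L : MvPolynomial σ R →ₗ[R] R) (a : R) (p : MvPolynomial σ R) :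
    L (C a * p) = a * L p := by
  rw [← smul_eq_C_mul, map_smul, smul_eq_mul]

theorem pderiv_bind₁ [Fintype σ] (f : σ → MvPolynomial τ R) (p : MvPolynomial σ R) (k : τ) :
    pderiv k (bind₁ f p) = ∑ j, bind₁ f (pderiv j p) * pderiv k (f j) := by
  classical
  induction p using MvPolynomial.induction_on with
  | C a => simp only [bind₁_C_right, pderiv_C, map_zero, zero_mul, Finset.sum_const_zero]
  | add p q hp hq => simp only [map_add, hp, hq, add_mul, Finset.sum_add_distrib]
  | mul_X p i hp =>
    have hX (j : σ) : bind₁ f (pderiv j (p * X i)) * pderiv k (f j) =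
        f i * (bind₁ f (pderiv j p) * pderiv k (f j)) +
          if i = j then bind₁ f p * pderiv k (f j) else 0 := by
      rw [pderiv_mul, pderiv_X, Pi.single_apply]
      split_ifs <;> simp [*] <;> ring
    rw [map_mul, bind₁_X_right, pderiv_mul, hp, mul_comm _ (f i)]
    simp only [hX, Finset.sum_add_distrib, Finset.mul_sum, Finset.sum_ite_eq, Finset.mem_univ,
      if_true]

section Fintype

variable [Fintype σ]

theorem toMvPolynomial_eq_sum_C_mul_X (M : Matrix τ σ R) (i : τ) :
    M.toMvPolynomial i = ∑ j, C (M i j) * X j := by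
  simp only [Matrix.toMvPolynomial, C_mul_X_eq_monomial]

theorem pderiv_toMvPolynomial (M : Matrix τ σ R) (i : τ) (j : σ) :
    pderiv j (M.toMvPolynomial i) = C (M i j) := by
  classical
  simp [toMvPolynomial_eq_sum_C_mul_X, pderiv_X, Pi.single_apply]

theorem eval_bind₁_toMvPolynomial (M : Matrix τ σ R) (x : σ → R) (p : MvPolynomial τ R) :
    eval x (bind₁ M.toMvPolynomial p) = eval (M *ᵥ x) p := by
  rw [eval, eval₂Hom_bind₁]
  exact congrArg (eval · p) (funext fun i ↦ M.toMvPolynomial_eval_eq_apply i x)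

theorem toMvPolynomial_mul_eq_sum [Fintype τ] {υ : Type*} (M : Matrix υ τ R) (N : Matrix τ σ R)
    (i : υ) : (M * N).toMvPolynomial i = ∑ j, C (M i j) * N.toMvPolynomial j := by
  rw [Matrix.toMvPolynomial_mul, toMvPolynomial_eq_sum_C_mul_X M]
  simp only [map_sum, map_mul, bind₁_C_right, bind₁_X_right]

/-- The polynomial `∑ i j, B i j * X i * X j`, whose evaluation is the quadratic form
`x ↦ x ⬝ᵥ B *ᵥ x`. -/
def quadPoly (B : Matrix σ σ R) : MvPolynomial σ R :=
  ∑ i, X i * B.toMvPolynomial i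

theorem eval_quadPoly (B : Matrix σ σ R) (x : σ → R) : eval x (quadPoly B) = x ⬝ᵥ B *ᵥ x := by
  simp only [quadPoly, map_sum, map_mul, eval_X, Matrix.toMvPolynomial_eval_eq_apply, dotProduct]

theorem pderiv_quadPoly (B : Matrix σ σ R) (j : σ) :
    pderiv j (quadPoly B) = (B + Bᵀ).toMvPolynomial j := by
  classical
  simp only [quadPoly, map_sum, pderiv_mul, pderiv_toMvPolynomial, pderiv_X, Pi.single_apply,
    Finset.sum_add_distrib, ite_mul, one_mul, zero_mul, Finset.sum_ite_eq', Finset.mem_univ,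
    if_true, Matrix.toMvPolynomial_add, Pi.add_apply, toMvPolynomial_eq_sum_C_mul_X Bᵀ,
    transpose_apply]
  simp only [mul_comm (X _)]

/-- Stein's identity, alias Gaussian integration by parts, for a linear functional `L` on
polynomials: the algebraic content of `L p` being the expectation of `p ξ` for a centered
Gaussian vector `ξ` with covariance matrix `Γ`. The normalization `L 1 = 1` is not included. -/
def IsSteinFunctional (Γ : Matrix σ σ R) (L : MvPolynomial σ R →ₗ[R] R) : Prop :=
  ∀ i p, L (X i * p) = ∑ j, Γ i j * L (pderiv j p)

namespace IsSteinFunctional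

variable {Γ : Matrix σ σ R} {L : MvPolynomial σ R →ₗ[R] R}

theorem apply_toMvPolynomial_mul (hL : IsSteinFunctional Γ L) (M : Matrix τ σ R) (i : τ)
    (p : MvPolynomial σ R) :
    L (M.toMvPolynomial i * p) = ∑ j, (M * Γ) i j * L (pderiv j p) := by
  have hterm (j : σ) : L (C (M i j) * X j * p) = ∑ k, M i j * Γ j k * L (pderiv k p) := by
    rw [mul_assoc, linearMap_C_mul, hL, Finset.mul_sum]
    simp only [mul_assoc]
  simp only [toMvPolynomial_eq_sum_C_mul_X, Finset.sum_mul, map_sum, hterm, Matrix.mul_apply]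
  exact Finset.sum_comm

theorem comp_bind₁ [Fintype τ] (hL : IsSteinFunctional Γ L) (S : Matrix τ σ R) :
    IsSteinFunctional (S * Γ * Sᵀ) (L ∘ₗ (bind₁ S.toMvPolynomial).toLinearMap) := by
  intro i p
  have hderiv (j : σ) : L (pderiv j (bind₁ S.toMvPolynomial p)) =
      ∑ k, S k j * L (bind₁ S.toMvPolynomial (pderiv k p)) := by
    simp only [pderiv_bind₁, pderiv_toMvPolynomial, map_sum, mul_comm _ (C _), linearMap_C_mul]
  simp only [LinearMap.comp_apply, AlgHom.toLinearMap_apply, map_mul, bind₁_X_right,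
    hL.apply_toMvPolynomial_mul, hderiv, Matrix.mul_apply (N := Sᵀ), transpose_apply,
    Finset.mul_sum, Finset.sum_mul, mul_assoc]
  exact Finset.sum_comm

theorem apply_quadPoly_mul (hL : IsSteinFunctional Γ L) (B : Matrix σ σ R)
    (p : MvPolynomial σ R) :
    L (quadPoly B * p) =
      (B * Γ).trace * L p + ∑ i, ∑ j, (B * Γ) i j * L (X i * pderiv j p) := by
  classical
  have hexpand : quadPoly B * p = ∑ i, B.toMvPolynomial i * (X i * p) := by
    simp only [quadPoly, Finset.sum_mul, mul_comm (X _), mul_assoc]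
  simp only [hexpand, map_sum, hL.apply_toMvPolynomial_mul, pderiv_mul, pderiv_X,
    Pi.single_apply, ite_mul, one_mul, zero_mul, map_add, mul_add, Finset.sum_add_distrib,
    apply_ite L, map_zero, mul_ite, mul_zero, Finset.sum_ite_eq, Finset.mem_univ, if_true,
    Matrix.trace, Matrix.diag_apply, Finset.sum_mul]

theorem apply_quadPoly_mul_pow (hL : IsSteinFunctional Γ L) {A : Matrix σ σ R} (hA : A.IsSymm)
    (B : Matrix σ σ R) (n : ℕ) :
    L (quadPoly B * quadPoly A ^ n) = (B * Γ).trace * L (quadPoly A ^ n) +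
      2 * n * L (quadPoly (B * Γ * A) * quadPoly A ^ (n - 1)) := by
  have hpderiv (i j : σ) : X i * pderiv j (quadPoly A ^ n) =
      C (2 * n : R) * (X i * A.toMvPolynomial j * quadPoly A ^ (n - 1)) := by
    rw [pderiv_pow, pderiv_quadPoly, hA.eq, Matrix.toMvPolynomial_add, Pi.add_apply, map_mul,
      map_ofNat, map_natCast]
    ring
  have hquad : quadPoly (B * Γ * A) * quadPoly A ^ (n - 1) =
      ∑ i, ∑ j, C ((B * Γ) i j) * (X i * A.toMvPolynomial j * quadPoly A ^ (n - 1)) := by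
    simp only [quadPoly, toMvPolynomial_mul_eq_sum (B * Γ), Finset.mul_sum, Finset.sum_mul]
    exact Finset.sum_congr rfl fun i _ ↦ Finset.sum_congr rfl fun j _ ↦ by ring
  simp only [hL.apply_quadPoly_mul, hpderiv, hquad, map_sum, linearMap_C_mul, Finset.mul_sum,
    mul_left_comm (2 * (n : R))]

variable [DecidableEq σ]

theorem apply_quadPoly_pow_mul (hL : IsSteinFunctional Γ L) {A : Matrix σ σ R} (hA : A.IsSymm)
    (k n : ℕ) :
    L (quadPoly ((A * Γ) ^ k * A) * quadPoly A ^ n) = ∑ a ∈ Finset.range (n + 1),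
      2 ^ a * n.descFactorial a * ((A * Γ) ^ (k + 1 + a)).trace * L (quadPoly A ^ (n - a)) := by
  induction n generalizing k with
  | zero =>
    rw [hL.apply_quadPoly_mul_pow hA]
    simp [Matrix.mul_assoc, pow_succ]
  | succ n ih =>
    have hpow : (A * Γ) ^ k * A * Γ = (A * Γ) ^ (k + 1) := by rw [pow_succ, Matrix.mul_assoc]
    rw [hL.apply_quadPoly_mul_pow hA, hpow, Nat.add_sub_cancel, ih,
      Finset.sum_range_succ' _ (n + 1), add_comm, Finset.mul_sum]
    congr 1
    · refine Finset.sum_congr rfl fun a _ ↦ ?_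
      rw [Nat.succ_descFactorial_succ, show k + 1 + (a + 1) = k + 1 + 1 + a by ring,
        Nat.add_sub_add_right]
      push_cast
      ring
    · simp

theorem apply_quadPoly_pow_succ (hL : IsSteinFunctional Γ L) {A : Matrix σ σ R} (hA : A.IsSymm)
    (n : ℕ) :
    L (quadPoly A ^ (n + 1)) = ∑ a ∈ Finset.range (n + 1),
      2 ^ a * n.descFactorial a * ((A * Γ) ^ (a + 1)).trace * L (quadPoly A ^ (n - a)) := by
  simpa only [pow_zero, Matrix.one_mul, ← pow_succ', Nat.zero_add, add_comm 1] using
    hL.apply_quadPoly_pow_mul hA 0 n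

end IsSteinFunctional

end Fintype

end SteinFunctional

section GaussianMoments

open scoped NNReal

theorem integral_pow_succ_gaussianReal (m : ℝ) (v : ℝ≥0) (n : ℕ) :
    ∫ x, x ^ (n + 1) ∂gaussianReal m v =
      m * ∫ x, x ^ n ∂gaussianReal m v + n * v * ∫ x, x ^ (n - 1) ∂gaussianReal m v := by
  set f : ℝ → ℝ := fun t ↦ Real.exp (m * t + v * t ^ 2 / 2) with hf
  have hmoment (k : ℕ) : ∫ x, x ^ k ∂gaussianReal m v = iteratedDeriv k f 0 := by
    rw [hf, ← mgf_id_gaussianReal, iteratedDeriv_mgf_zero (by simp)]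
    rfl
  have hlin : deriv (fun t : ℝ ↦ m + v * t) = fun _ ↦ (v : ℝ) := by
    ext t
    simp
  have hderiv : deriv f = fun t ↦ (m + v * t) * f t := by
    ext t
    have hexponent : HasDerivAt (fun t : ℝ ↦ m * t + v * t ^ 2 / 2) (m + v * t) t := by
      convert! ((hasDerivAt_id t).const_mul m).add
        (((hasDerivAt_pow 2 t).const_mul (v : ℝ)).div_const 2) using 1
      push_cast
      ring
    rw [hexponent.exp.deriv, mul_comm]
  simp only [hmoment]
  rw [iteratedDeriv_succ', hderiv, iteratedDeriv_fun_mul (by fun_prop) (by fun_prop)]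
  rcases n with _ | n
  · simp
  · rw [Finset.sum_range_succ', Finset.sum_range_succ',
      Finset.sum_eq_zero fun i _ ↦ by
        simp [iteratedDeriv_succ', hlin, iteratedDeriv_const]]
    simp [iteratedDeriv_one, hlin, add_comm]

theorem integrable_pow_gaussianReal (m : ℝ) (v : ℝ≥0) (n : ℕ) :
    Integrable (fun x ↦ x ^ n) (gaussianReal m v) :=
  integrable_pow_of_mem_interior_integrableExpSet (X := id) (by simp) n

end GaussianMoments

section MomentFunctional

open MvPolynomial
open scoped NNReal

variable {ι : Type*}

/-- The expectation functional `p ↦ ∫ x, p x ∂μ` of a measure `μ` all of whose moments exist. -/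
def momentFunctional (μ : Measure (ι → ℝ)) (hμ : ∀ p, Integrable (fun x ↦ eval x p) μ) :
    MvPolynomial ι ℝ →ₗ[ℝ] ℝ where
  toFun p := ∫ x, eval x p ∂μ
  map_add' p q := by simp only [map_add, integral_add (hμ p) (hμ q)]
  map_smul' c p := by simp only [smul_eval, integral_const_mul, RingHom.id_apply, smul_eq_mul]

theorem momentFunctional_apply (μ : Measure (ι → ℝ)) (hμ : ∀ p, Integrable (fun x ↦ eval x p) μ)
    (p : MvPolynomial ι ℝ) : momentFunctional μ hμ p = ∫ x, eval x p ∂μ := rfl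

variable [Fintype ι]

theorem eval_monomial_eq_mul_prod (s : ι →₀ ℕ) (a : ℝ) (x : ι → ℝ) :
    eval x (monomial s a) = a * ∏ i, x i ^ s i := by
  rw [eval_monomial, Finsupp.prod_fintype _ _ fun _ ↦ pow_zero _]

theorem integrable_eval_pi {μ : ι → Measure ℝ} [∀ i, SigmaFinite (μ i)]
    (hμ : ∀ i n, Integrable (fun x ↦ x ^ n) (μ i)) (p : MvPolynomial ι ℝ) :
    Integrable (fun x ↦ eval x p) (Measure.pi μ) := by
  induction p using MvPolynomial.induction_on' with
  | monomial s a =>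
    simp only [eval_monomial_eq_mul_prod]
    exact (Integrable.fintype_prod fun i ↦ hμ i (s i)).const_mul a
  | add p q hp hq =>
    simp only [map_add]
    exact hp.add hq

theorem integral_eval_monomial_pi (μ : ι → Measure ℝ) [∀ i, SigmaFinite (μ i)] (s : ι →₀ ℕ)
    (a : ℝ) :
    ∫ x, eval x (monomial s a) ∂Measure.pi μ = a * ∏ i, ∫ x, x ^ s i ∂μ i := by
  simp only [eval_monomial_eq_mul_prod, integral_const_mul]
  rw [integral_fintype_prod_eq_prod fun i x ↦ x ^ s i]

theorem isSteinFunctional_momentFunctional_pi [DecidableEq ι] (v : ι → ℝ≥0) :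
    IsSteinFunctional (diagonal fun i ↦ (v i : ℝ))
      (momentFunctional (Measure.pi fun i ↦ gaussianReal 0 (v i))
        (integrable_eval_pi fun i ↦ integrable_pow_gaussianReal 0 (v i))) := by
  intro i p
  rw [Finset.sum_eq_single i (fun j _ hj ↦ by rw [diagonal_apply_ne' _ hj, zero_mul]) (by simp),
    diagonal_apply_eq]
  induction p using MvPolynomial.induction_on' with
  | add p q hp hq => simp only [mul_add, map_add, hp, hq]
  | monomial s a =>
    have hsplit {t : ι →₀ ℕ} (ht : ∀ j ≠ i, t j = s j) :
        ∏ j, ∫ x, x ^ t j ∂gaussianReal 0 (v j) = (∫ x, x ^ t i ∂gaussianReal 0 (v i)) *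
          ∏ j ∈ Finset.univ.erase i, ∫ x, x ^ s j ∂gaussianReal 0 (v j) := by
      rw [← Finset.mul_prod_erase _ _ (Finset.mem_univ i)]
      exact congrArg _ (Finset.prod_congr rfl fun j hj ↦ by rw [ht j (Finset.ne_of_mem_erase hj)])
    have hself : ∫ x, x ^ (s i + 1) ∂gaussianReal 0 (v i) =
        s i * v i * ∫ x, x ^ (s i - 1) ∂gaussianReal 0 (v i) := by
      rw [integral_pow_succ_gaussianReal, zero_mul, zero_add]
    rw [pderiv_monomial, X, monomial_mul, one_mul, momentFunctional_apply,
      momentFunctional_apply, integral_eval_monomial_pi, integral_eval_monomial_pi,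
      hsplit fun j hj ↦ by simp [hj], hsplit fun j hj ↦ by simp [hj], Finsupp.add_apply,
      Finsupp.tsub_apply, Finsupp.single_eq_same, add_comm 1, hself]
    ring

end MomentFunctional

section CenteredGaussian

theorem ext_of_map_dotProduct {ι : Type*} [Fintype ι] {μ ν : Measure (ι → ℝ)} [IsFiniteMeasure μ]
    [IsFiniteMeasure ν] (h : ∀ v : ι → ℝ, μ.map (v ⬝ᵥ ·) = ν.map (v ⬝ᵥ ·)) : μ = ν := by
  classical
  refine Measure.ext_of_charFunDual (funext fun l ↦ ?_)
  have hl : ⇑l = ((dotProductEquiv ℝ ι).symm l ⬝ᵥ ·) := by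
    ext x
    exact (LinearMap.congr_fun ((dotProductEquiv ℝ ι).apply_symm_apply l) x).symm
  rw [charFunDual_eq_charFun_map_one, charFunDual_eq_charFun_map_one, hl, h]

open scoped MatrixOrder in
theorem exists_mul_transpose_eq {ι : Type*} [Fintype ι] {C : Matrix ι ι ℝ} (hC : C.PosSemidef) :
    ∃ S : Matrix ι ι ℝ, S * Sᵀ = C := by
  classical
  obtain ⟨B, hB⟩ := CStarAlgebra.nonneg_iff_eq_star_mul_self.1 hC.nonneg
  exact ⟨Bᵀ, by rw [hB, transpose_transpose, star_eq_conjTranspose,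
    conjTranspose_eq_transpose_of_trivial]⟩

namespace IsCenteredGaussian

variable {Ω Ω' : Type*} [MeasurableSpace Ω] [MeasurableSpace Ω'] {P : Measure Ω}
  {Q : Measure Ω'} {m d : ℕ} {C : Matrix (Fin d) (Fin d) ℝ}

theorem id_pi_gaussianReal (v : Fin d → NNReal) :
    IsCenteredGaussian (Measure.pi fun i ↦ gaussianReal 0 (v i)) id
      (diagonal fun i ↦ (v i : ℝ)) := by
  refine ⟨measurable_id, fun u ↦ ?_⟩
  refine Measure.ext_of_charFun (funext fun t ↦ ?_)
  have hvar : u ⬝ᵥ (diagonal fun i ↦ (v i : ℝ)) *ᵥ u = ∑ i, v i * u i ^ 2 := by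
    simp only [dotProduct, mulVec_diagonal]
    exact Finset.sum_congr rfl fun i _ ↦ by ring
  have hfactor (x : Fin d → ℝ) : Complex.exp (t * (u ⬝ᵥ x : ℝ) * Complex.I) =
      ∏ i, Complex.exp (↑(t * u i) * x i * Complex.I) := by
    rw [← Complex.exp_sum, dotProduct, Complex.ofReal_sum, Finset.mul_sum, Finset.sum_mul]
    push_cast
    simp only [mul_assoc]
  rw [charFun_apply_real, integral_map (by fun_prop) (by fun_prop), charFun_gaussianReal, hvar,
    Real.coe_toNNReal _ (Finset.sum_nonneg fun i _ ↦ by positivity)]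
  simp only [id, hfactor]
  rw [integral_fintype_prod_eq_prod fun i x ↦ Complex.exp (↑(t * u i) * (x : ℝ) * Complex.I)]
  simp only [← charFun_apply_real, charFun_gaussianReal, ← Complex.exp_sum]
  push_cast
  simp only [Finset.sum_mul, Finset.sum_div, zero_mul, mul_zero, zero_sub, Finset.sum_neg_distrib]
  congr 2
  exact Finset.sum_congr rfl fun i _ ↦ by ring

theorem mulVec {ξ : Ω → Fin d → ℝ} (hξ : IsCenteredGaussian P ξ C) (S : Matrix (Fin m) (Fin d) ℝ) :
    IsCenteredGaussian P (fun ω ↦ S *ᵥ ξ ω) (S * C * Sᵀ) := by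
  refine ⟨(continuous_const.matrix_mulVec continuous_id).measurable.comp hξ.1, fun v ↦ ?_⟩
  have hquad : v ⬝ᵥ (S * C * Sᵀ) *ᵥ v = (v ᵥ* S) ⬝ᵥ C *ᵥ (v ᵥ* S) := by
    simp only [← Matrix.mulVec_mulVec, Matrix.dotProduct_mulVec, Matrix.mulVec_transpose]
  rw [hquad, ← hξ.2]
  simp only [Matrix.dotProduct_mulVec]

theorem map_eq_map [IsFiniteMeasure P] [IsFiniteMeasure Q] {ξ : Ω → Fin d → ℝ}
    {η : Ω' → Fin d → ℝ} (hξ : IsCenteredGaussian P ξ C) (hη : IsCenteredGaussian Q η C) :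
    P.map ξ = Q.map η := by
  refine ext_of_map_dotProduct fun v ↦ ?_
  have hv : Measurable fun x : Fin d → ℝ ↦ v ⬝ᵥ x :=
    (continuous_const.dotProduct continuous_id).measurable
  rw [Measure.map_map hv hξ.1, Measure.map_map hv hη.1]
  exact (hξ.2 v).trans (hη.2 v).symm

open MvPolynomial in
theorem exists_isSteinFunctional [IsFiniteMeasure P] {ξ : Ω → Fin d → ℝ}
    (hξ : IsCenteredGaussian P ξ C) (hC : C.PosSemidef) :
    ∃ L, IsSteinFunctional C L ∧ ∀ p, L p = ∫ ω, eval (ξ ω) p ∂P := by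
  obtain ⟨S, rfl⟩ := exists_mul_transpose_eq hC
  have hL := (isSteinFunctional_momentFunctional_pi fun _ : Fin d ↦ 1).comp_bind₁ S
  have hη := (id_pi_gaussianReal fun _ : Fin d ↦ 1).mulVec S
  simp only [NNReal.coe_one, diagonal_one, Matrix.mul_one] at hL hη
  refine ⟨_, hL, fun p ↦ ?_⟩
  have hp : StronglyMeasurable fun x : Fin d → ℝ ↦ eval x p :=
    p.continuous_eval.stronglyMeasurable
  calc ∫ z, eval z (bind₁ S.toMvPolynomial p) ∂Measure.pi (fun _ ↦ gaussianReal 0 1)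
      = ∫ z, eval (S *ᵥ z) p ∂Measure.pi (fun _ ↦ gaussianReal 0 1) := by
        simp only [eval_bind₁_toMvPolynomial]
    _ = ∫ x, eval x p ∂(Measure.pi fun _ ↦ gaussianReal 0 1).map (S *ᵥ ·) :=
        (integral_map hη.1.aemeasurable hp.aestronglyMeasurable).symm
    _ = ∫ x, eval x p ∂P.map ξ := by rw [hξ.map_eq_map hη]; rfl
    _ = ∫ ω, eval (ξ ω) p ∂P := integral_map hξ.1.aemeasurable hp.aestronglyMeasurable

end IsCenteredGaussian

end CenteredGaussian

section Compositions

variable {R : Type*} [CommSemiring R] {m n : ℕ}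

theorem mem_Jset {k : Fin m → ℕ} : k ∈ Jset m n ↔ ∑ i, k i = n ∧ ∀ j, 1 ≤ k j := by
  rw [Jset, Finset.mem_filter, Finset.Nat.mem_antidiagonalTuple]

theorem le_of_mem_Jset {k : Fin m → ℕ} (hk : k ∈ Jset m n) : m ≤ n := by
  obtain ⟨hsum, hpos⟩ := mem_Jset.1 hk
  calc m = ∑ _i : Fin m, 1 := by simp
    _ ≤ ∑ i, k i := Finset.sum_le_sum fun i _ ↦ hpos i
    _ = n := hsum

theorem Jset_eq_empty_of_lt (h : n < m) : Jset m n = ∅ :=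
  Finset.eq_empty_of_forall_notMem fun _ hk ↦ h.not_ge (le_of_mem_Jset hk)

theorem Jset_zero_of_pos (hn : 0 < n) : Jset 0 n = ∅ :=
  Finset.eq_empty_of_forall_notMem fun _ hk ↦ hn.ne (by simpa using (mem_Jset.1 hk).1)

theorem sum_range_sum_Jset {M : Type*} [AddCommMonoid M] (hn : 0 < n)
    (F : ∀ m, (Fin m → ℕ) → M) :
    ∑ m ∈ Finset.range (n + 1), ∑ k ∈ Jset m n, F m k =
      ∑ m ∈ Finset.Icc 1 n, ∑ k ∈ Jset m n, F m k := by
  rw [Finset.range_eq_Ico, Finset.sum_eq_sum_Ico_succ_bot n.succ_pos, Jset_zero_of_pos hn,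
    Finset.sum_empty, zero_add]
  rfl

theorem sum_Jset_succ {M : Type*} [AddCommMonoid M] (m n : ℕ) (F : (Fin (m + 1) → ℕ) → M) :
    ∑ k ∈ Jset (m + 1) (n + 1), F k =
      ∑ a ∈ Finset.range (n + 1), ∑ k ∈ Jset m (n - a), F (Fin.cons (a + 1) k) := by
  rw [Finset.sum_sigma']
  refine (Finset.sum_bij' (fun x _ ↦ Fin.cons (x.1 + 1) x.2) (fun k _ ↦ ⟨k 0 - 1, Fin.tail k⟩)
    ?_ ?_ ?_ ?_ fun _ _ ↦ rfl).symm
  · rintro ⟨a, k⟩ h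
    simp only [Finset.mem_sigma, Finset.mem_range, mem_Jset] at h
    refine mem_Jset.2 ⟨?_, Fin.cases (by simp) (by simpa using h.2.2)⟩
    simp only [Fin.sum_univ_succ, Fin.cons_zero, Fin.cons_succ]
    omega
  · intro k h
    obtain ⟨hsum, hpos⟩ := mem_Jset.1 h
    have hfirst := hpos 0
    rw [Fin.sum_univ_succ] at hsum
    simp only [Finset.mem_sigma, Finset.mem_range, mem_Jset, Fin.tail]
    exact ⟨by omega, by omega, fun j ↦ hpos j.succ⟩
  · rintro ⟨a, k⟩ -
    simp
  · intro k h
    simp only [Nat.sub_add_cancel ((mem_Jset.1 h).2 0)]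
    exact Fin.cons_self_tail k

theorem psum_zero (k : Fin m → ℕ) : psum k 0 = 0 := by
  simp [psum]

theorem psum_cons (a : ℕ) (k : Fin m → ℕ) (j : ℕ) :
    psum (Fin.cons a k : Fin (m + 1) → ℕ) (j + 1) = a + psum k j := by
  simp [psum, Finset.sum_filter, Fin.sum_univ_succ]

/-- The coefficient that the tuple of jumps `k` contributes when the recurrence
`M (n + 1) = ∑ a ≤ n, w n a * M (n - a)` is unrolled from `M n`: the `j`-th jump leads from
`n - psum k j` to `n - psum k (j + 1)`. Jumps are positive, so `w` takes them shifted by one. -/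
def jumpWeight (w : ℕ → ℕ → R) (n : ℕ) (k : Fin m → ℕ) : R :=
  ∏ j : Fin m, w (n - psum k j - 1) (k j - 1)

theorem jumpWeight_cons (w : ℕ → ℕ → R) (n a : ℕ) (k : Fin m → ℕ) :
    jumpWeight w (n + 1) (Fin.cons (a + 1) k : Fin (m + 1) → ℕ) =
      w n a * jumpWeight w (n - a) k := by
  have hindex (j : Fin m) : n + 1 - (a + 1 + psum k j) - 1 = n - a - psum k j - 1 := by omega
  simp only [jumpWeight, Fin.prod_univ_succ, Fin.val_zero, psum_zero, Fin.cons_zero, Nat.sub_zero,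
    Nat.add_sub_cancel, Fin.val_succ, psum_cons, Fin.cons_succ, hindex]

theorem eq_sum_jumpWeight_mul {M : ℕ → R} {w : ℕ → ℕ → R}
    (hM : ∀ n, M (n + 1) = ∑ a ∈ Finset.range (n + 1), w n a * M (n - a)) (n : ℕ) :
    M n = (∑ m ∈ Finset.range (n + 1), ∑ k ∈ Jset m n, jumpWeight w n k) * M 0 := by
  induction n using Nat.strong_induction_on with
  | _ n ih =>
  rcases n with _ | n
  · simp [Jset, jumpWeight]
  have hrange (a : ℕ) :
      ∑ m ∈ Finset.range (n - a + 1), ∑ k ∈ Jset m (n - a), jumpWeight w (n - a) k =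
        ∑ m ∈ Finset.range (n + 1), ∑ k ∈ Jset m (n - a), jumpWeight w (n - a) k := by
    refine Finset.sum_subset (Finset.range_subset_range.2 (by omega)) fun m _ hm ↦ ?_
    rw [Finset.mem_range, not_lt] at hm
    rw [Jset_eq_empty_of_lt hm, Finset.sum_empty]
  calc M (n + 1) = ∑ a ∈ Finset.range (n + 1), w n a * M (n - a) := hM n
    _ = ∑ a ∈ Finset.range (n + 1), ∑ m ∈ Finset.range (n + 1),
          ∑ k ∈ Jset m (n - a), w n a * jumpWeight w (n - a) k * M 0 := by
        refine Finset.sum_congr rfl fun a _ ↦ ?_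
        rw [ih (n - a) (by omega), hrange a]
        simp only [Finset.sum_mul, Finset.mul_sum, mul_assoc]
    _ = (∑ m ∈ Finset.range (n + 1), ∑ k ∈ Jset (m + 1) (n + 1), jumpWeight w (n + 1) k) * M 0 := by
        simp only [sum_Jset_succ, jumpWeight_cons, Finset.sum_mul]
        exact Finset.sum_comm
    _ = _ := by
        rw [Finset.sum_range_succ' _ (n + 1), Jset_zero_of_pos n.succ_pos, Finset.sum_empty,
          add_zero]

theorem prod_pow_sub_one_of_mem_Jset {k : Fin m → ℕ} (hk : k ∈ Jset m n) (x : R) :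
    ∏ j, x ^ (k j - 1) = x ^ (n - m) := by
  obtain ⟨hsum, hpos⟩ := mem_Jset.1 hk
  rw [Finset.prod_pow_eq_pow_sum, Finset.sum_tsub_distrib _ fun j _ ↦ hpos j, hsum]
  simp

theorem jumpWeight_pow_mul_descFactorial_mul {k : Fin m → ℕ} (hk : k ∈ Jset m n) (x : R)
    (r : ℕ → R) :
    jumpWeight (fun n a ↦ x ^ a * n.descFactorial a * r (a + 1)) n k =
      x ^ (n - m) * (∏ j, r (k j)) *
        ∏ j : Fin m, ((n - psum k j - 1).descFactorial (k j - 1) : R) := by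
  simp only [jumpWeight, Finset.prod_mul_distrib, prod_pow_sub_one_of_mem_Jset hk,
    Nat.sub_add_cancel ((mem_Jset.1 hk).2 _)]
  rw [mul_right_comm]

end Compositions

theorem stmt13 {Ω : Type*} [MeasurableSpace Ω] (P : Measure Ω) [IsProbabilityMeasure P]
    {d : ℕ} (ξ : Ω → Fin d → ℝ) (C A : Matrix (Fin d) (Fin d) ℝ)
    (hC : C.PosSemidef) (hA : A.IsSymm)
    (hξ : IsCenteredGaussian P ξ C)
    (hint : ∀ k : ℕ, Integrable (fun ω => (ξ ω ⬝ᵥ A.mulVec (ξ ω)) ^ k) P)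
    (n : ℕ) (hn : 1 ≤ n) :
    (∫ ω, (ξ ω ⬝ᵥ A.mulVec (ξ ω)) ^ n ∂P) =
      ∑ m ∈ Finset.Icc 1 n, ∑ k ∈ Jset m n,
        (2 : ℝ) ^ (n - m) * (∏ j : Fin m, Matrix.trace ((A * C) ^ (k j))) *
          ∏ j : Fin m, ((n - psum k (j : ℕ) - 1).descFactorial (k j - 1) : ℝ) := by
  obtain ⟨L, hL, hLP⟩ := hξ.exists_isSteinFunctional hC
  have hmoment : ∫ ω, (ξ ω ⬝ᵥ A *ᵥ ξ ω) ^ n ∂P = L (quadPoly A ^ n) := by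
    simp only [hLP, map_pow, eval_quadPoly]
  have hone : L (quadPoly A ^ 0) = 1 := by simp [hLP]
  have hunroll := eq_sum_jumpWeight_mul (M := fun n ↦ L (quadPoly A ^ n))
    (hL.apply_quadPoly_pow_succ hA) n
  rw [hmoment, hunroll, hone, mul_one, sum_range_sum_Jset hn]
  exact Finset.sum_congr rfl fun m _ ↦ Finset.sum_congr rfl fun k hk ↦
    jumpWeight_pow_mul_descFactorial_mul hk 2 fun i ↦ ((A * C) ^ i).trace
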